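/- Fix m ∈ (−1,1), suppose Assumption 1 holds, and let a ∈ (0,ς). Let (A_n)_{n∈ℕ} be h-measurable random variables with A_n(h)/n → a P_h-almost surely. Then P_h-almost surely: (i) Λ_n(h, A_n(h)) → λ̂(a), where λ̂(a) is the unique λ ≥ 0 with G'(λ) = a; and (ii) M*_n(h, A_n(h))/n → G*(a). -/

import Mathlib

open MeasureTheory ProbabilityTheory Real Filter Set
open scoped ENNReal Topology BigOperators

noncomputable section

/-- Assumption 1 of the paper, phrased for the law `μ` of `h₁`. -/
structure Assumption1 (μ : Measure ℝ) : Prop where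
  isProb : IsProbabilityMeasure μ
  acPart : ¬ μ.MutuallySingular (volume : Measure ℝ)
  smallBall : ∃ ε > (0:ℝ), ∃ p₁ > (0:ℝ), ∀ t ∈ Set.Ico (0:ℝ) ε,
    (μ {x : ℝ | |x| < t}).toReal ≤ p₁ * t
  densityLB : ∃ c d p₂ : ℝ, c < d ∧ 0 < p₂ ∧
    ∀ s : Set ℝ, s ⊆ Set.Icc c d → MeasurableSet s →
      ENNReal.ofReal p₂ * volume s ≤ μ s
  intAbs : Integrable (fun x : ℝ => |x|) μ
  intSq : Integrable (fun x : ℝ => x ^ 2) μ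
  intCube : Integrable (fun x : ℝ => |x| ^ 3) μ

/-- `g(λ) = log(((1+m)/2)e^{λ(1−m)} + ((1−m)/2)e^{−λ(1+m)})`. -/
def gfun (m lam : ℝ) : ℝ :=
  Real.log ((1 + m) / 2 * Real.exp (lam * (1 - m)) + (1 - m) / 2 * Real.exp (-(lam * (1 + m))))

/-- `M_n(h,λ) = Σ_{i=1}^n g(λ h_i)`. -/
def Mn (m : ℝ) (n : ℕ) (hs : ℕ → ℝ) (lam : ℝ) : ℝ :=
  ∑ i ∈ Finset.range n, gfun m (lam * hs i)

/-- `M*_n(h,a) = sup_{λ∈ℝ}(λa − M_n(h,λ))`. -/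
def MstarN (m : ℝ) (n : ℕ) (hs : ℕ → ℝ) (a : ℝ) : ℝ :=
  ⨆ lam : ℝ, (lam * a - Mn m n hs lam)

/-- `Σ_n(h) = −m Σ_{i=1}^n h_i + Σ_{i=1}^n |h_i|`. -/
def SigmaN (m : ℝ) (n : ℕ) (hs : ℕ → ℝ) : ℝ :=
  -m * ∑ i ∈ Finset.range n, hs i + ∑ i ∈ Finset.range n, |hs i|

/-- `G(λ) = E[g(λ h₁)]`. -/
def Gf (μ : Measure ℝ) (m lam : ℝ) : ℝ := ∫ x, gfun m (lam * x) ∂μ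

/-- `G*(a) = sup_{λ∈ℝ}(λa − G(λ))`. -/
def Gstar (μ : Measure ℝ) (m a : ℝ) : ℝ := ⨆ lam : ℝ, (lam * a - Gf μ m lam)

/-- `ς = −m ψ₁ + ψ₃`. -/
def sigmaBar (μ : Measure ℝ) (m : ℝ) : ℝ := -m * ∫ x, x ∂μ + ∫ x, |x| ∂μ

/-! After tilting by the linear term `λ A_n / n`, the functions `λ ↦ M_n(h, λ) / n` are convex and,
by the strong law of large numbers, almost surely converge on a countable dense set to `G`, tilted
by `λ a`. The point `Λ_n` minimises the `n`-th tilted function, and `λ̂` is the strict minimiser of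
the limit because `G` is strictly convex. For convex functions on the line, convergence on a dense
set already forces convergence of minimisers and of minimal values, and the minimal values are, up
to sign, the Legendre transforms. -/

section ConvexLimits

variable {ι : Type*} {l : Filter ι} {f : ι → ℝ → ℝ} {g : ℝ → ℝ} {s : Set ℝ} {x₀ : ℝ} {x : ι → ℝ}

lemma le_max_of_quasiconvexOn_univ {φ : ℝ → ℝ} (hφ : QuasiconvexOn ℝ univ φ) {u v w : ℝ}
    (hw : w ∈ Icc u v) : φ w ≤ max (φ u) (φ v) :=
  ((hφ _).ordConnected.out ⟨mem_univ u, le_max_left _ _⟩ ⟨mem_univ v, le_max_right _ _⟩ hw).2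

theorem tendsto_of_isMinOn_of_quasiconvexOn (hf : ∀ i, QuasiconvexOn ℝ univ (f i)) (hs : Dense s)
    (hx₀ : x₀ ∈ s) (hlim : ∀ t ∈ s, Tendsto (f · t) l (𝓝 (g t)))
    (hg : ∀ t, t ≠ x₀ → g x₀ < g t) (hx : ∀ᶠ i in l, IsMinOn (f i) univ (x i)) :
    Tendsto x l (𝓝 x₀) := by
  have barrier {q : ℝ} (hqs : q ∈ s) (hq : q ≠ x₀) :
      ∀ᶠ i in l, max (f i x₀) (f i (x i)) < f i q := by
    filter_upwards [hx, (hlim x₀ hx₀).eventually_lt (hlim q hqs) (hg q hq)] with i hmin hlt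
    rwa [max_eq_left (hmin (mem_univ x₀))]
  refine tendsto_order.2 ⟨fun b hb => ?_, fun b hb => ?_⟩
  · obtain ⟨q, hqs, hbq, hq⟩ := hs.exists_between hb
    filter_upwards [barrier hqs hq.ne] with i hi
    refine hbq.trans (lt_of_not_ge fun hxq => hi.not_ge ?_)
    rw [max_comm]
    exact le_max_of_quasiconvexOn_univ (hf i) ⟨hxq, hq.le⟩
  · obtain ⟨q, hqs, hq, hqb⟩ := hs.exists_between hb
    filter_upwards [barrier hqs hq.ne'] with i hi
    exact (lt_of_not_ge fun hqx =>
      hi.not_ge (le_max_of_quasiconvexOn_univ (hf i) ⟨hq.le, hqx⟩)).trans hqb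

lemma eventually_apply_lt_of_quasiconvexOn (hf : ∀ i, QuasiconvexOn ℝ univ (f i)) (hs : Dense s)
    (hlim : ∀ t ∈ s, Tendsto (f · t) l (𝓝 (g t))) (hg : ContinuousAt g x₀)
    (hx : Tendsto x l (𝓝 x₀)) {c : ℝ} (hc : g x₀ < c) : ∀ᶠ i in l, f i (x i) < c := by
  obtain ⟨u, v, hx₀, huv⟩ := mem_nhds_iff_exists_Ioo_subset.1 (hg.eventually_lt_const hc)
  obtain ⟨p, hps, hup, hpx⟩ := hs.exists_between hx₀.1
  obtain ⟨q, hqs, hxq, hqv⟩ := hs.exists_between hx₀.2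
  have hp : g p < c := huv ⟨hup, hpx.trans hx₀.2⟩
  have hq : g q < c := huv ⟨hx₀.1.trans hxq, hqv⟩
  filter_upwards [(hlim p hps).eventually_lt_const hp, (hlim q hqs).eventually_lt_const hq,
    hx (Icc_mem_nhds hpx hxq)] with i hpi hqi hxi
  exact (le_max_of_quasiconvexOn_univ (hf i) hxi).trans_lt (max_lt hpi hqi)

theorem tendsto_apply_of_convexOn (hf : ∀ i, ConvexOn ℝ univ (f i)) (hs : Dense s)
    (hx₀ : x₀ ∈ s) (hlim : ∀ t ∈ s, Tendsto (f · t) l (𝓝 (g t))) (hg : ContinuousAt g x₀)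
    (hx : Tendsto x l (𝓝 x₀)) : Tendsto (fun i => f i (x i)) l (𝓝 (g x₀)) := by
  have upper {y : ι → ℝ} (hy : Tendsto y l (𝓝 x₀)) {c : ℝ} (hc : g x₀ < c) :
      ∀ᶠ i in l, f i (y i) < c :=
    eventually_apply_lt_of_quasiconvexOn (fun i => (hf i).quasiconvexOn) hs hlim hg hy hc
  refine tendsto_order.2 ⟨fun c hc => ?_, fun c hc => upper hx hc⟩
  -- The lower bound follows from the upper bound at the reflection of `x i` through `x₀`.
  have hrefl : Tendsto (fun i => 2 * x₀ - x i) l (𝓝 x₀) := by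
    simpa [two_mul] using hx.const_sub (2 * x₀)
  filter_upwards [upper hrefl (c := g x₀ + (g x₀ - c) / 3) (by linarith),
    (hlim x₀ hx₀).eventually_const_lt (u := g x₀ - (g x₀ - c) / 3) (by linarith)] with i hri hi
  have midpoint : f i x₀ ≤ (1 / 2) * f i (x i) + (1 / 2) * f i (2 * x₀ - x i) := by
    have hhalf : (0 : ℝ) ≤ 1 / 2 := by norm_num
    have hcenter : 1 / 2 * x i + 1 / 2 * (2 * x₀ - x i) = x₀ := by ring
    simpa only [smul_eq_mul, hcenter] using
      (hf i).2 (mem_univ (x i)) (mem_univ (2 * x₀ - x i)) hhalf hhalf (by norm_num)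
  linarith

end ConvexLimits

section Legendre

/-- The Legendre transform of a real function. Like every real supremum it takes the junk value `0`
where `x ↦ x * b - f x` is not bounded above. -/
def legendreTransform (f : ℝ → ℝ) (b : ℝ) : ℝ := ⨆ x, (x * b - f x)

lemma legendreTransform_div (f : ℝ → ℝ) (b : ℝ) {c : ℝ} (hc : 0 ≤ c) :
    legendreTransform (fun x => f x / c) (b / c) = legendreTransform f b / c := by
  simp only [legendreTransform, div_eq_mul_inv, Real.iSup_mul_of_nonneg (inv_nonneg.2 hc)]
  exact iSup_congr fun x => by ring

variable {f : ℝ → ℝ} {b x : ℝ}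

lemma convexOn_sub_mul_const (hf : ConvexOn ℝ univ f) (b : ℝ) :
    ConvexOn ℝ univ (fun x => f x - x * b) :=
  hf.sub ((LinearMap.mulRight ℝ b).concaveOn convex_univ)

lemma strictConvexOn_sub_mul_const (hf : StrictConvexOn ℝ univ f) (b : ℝ) :
    StrictConvexOn ℝ univ (fun x => f x - x * b) :=
  hf.sub_concaveOn ((LinearMap.mulRight ℝ b).concaveOn convex_univ)

lemma isMinOn_sub_mul_const_of_hasDerivAt (hf : ConvexOn ℝ univ f) (hx : HasDerivAt f b x) :
    IsMinOn (fun y => f y - y * b) univ x := by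
  have hderiv : HasDerivAt (fun y => f y - y * b) 0 x := by
    simpa using hx.fun_sub ((hasDerivAt_id x).mul_const b)
  exact (convexOn_sub_mul_const hf b).isMinOn_of_rightDeriv_eq_zero (by simp)
    (hderiv.hasDerivWithinAt.derivWithin (uniqueDiffWithinAt_Ioi x))

lemma legendreTransform_eq_of_hasDerivAt (hf : ConvexOn ℝ univ f) (hx : HasDerivAt f b x) :
    legendreTransform f b = x * b - f x := by
  refine IsGreatest.csSup_eq ⟨mem_range_self x, ?_⟩
  rintro _ ⟨y, rfl⟩
  have hmin := isMinOn_sub_mul_const_of_hasDerivAt hf hx (mem_univ y)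
  simp only [mem_ofPred_eq] at hmin
  linarith

lemma sub_mul_const_lt_of_hasDerivAt (hf : StrictConvexOn ℝ univ f) (hx : HasDerivAt f b x) {y : ℝ}
    (hy : y ≠ x) : f x - x * b < f y - y * b := by
  have hmin := isMinOn_sub_mul_const_of_hasDerivAt hf.convexOn hx
  refine (hmin (mem_univ y)).lt_of_ne fun heq => hy ?_
  refine (strictConvexOn_sub_mul_const hf b).eq_of_isMinOn (fun z hz => ?_) hmin
    (mem_univ y) (mem_univ x)
  exact heq.symm.trans_le (hmin hz)

end Legendre

section LegendreLimits

variable {ι : Type*} {l : Filter ι} {f : ι → ℝ → ℝ} {g : ℝ → ℝ} {s : Set ℝ} {a x₀ : ℝ}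
  {b x : ι → ℝ}

theorem tendsto_of_hasDerivAt_of_convexOn (hf : ∀ i, ConvexOn ℝ univ (f i))
    (hg : StrictConvexOn ℝ univ g) (hs : Dense s) (hx₀ : x₀ ∈ s)
    (hlim : ∀ t ∈ s, Tendsto (f · t) l (𝓝 (g t))) (hgd : HasDerivAt g a x₀)
    (hfd : ∀ᶠ i in l, HasDerivAt (f i) (b i) (x i)) (hb : Tendsto b l (𝓝 a)) :
    Tendsto x l (𝓝 x₀) :=
  tendsto_of_isMinOn_of_quasiconvexOn (f := fun i t => f i t - t * b i)
    (fun i => (convexOn_sub_mul_const (hf i) (b i)).quasiconvexOn) hs hx₀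
    (fun t ht => (hlim t ht).sub (hb.const_mul t))
    (fun _ => sub_mul_const_lt_of_hasDerivAt hg hgd)
    (hfd.mono fun i => isMinOn_sub_mul_const_of_hasDerivAt (hf i))

theorem tendsto_legendreTransform_of_convexOn (hf : ∀ i, ConvexOn ℝ univ (f i))
    (hg : StrictConvexOn ℝ univ g) (hs : Dense s) (hx₀ : x₀ ∈ s)
    (hlim : ∀ t ∈ s, Tendsto (f · t) l (𝓝 (g t))) (hgd : HasDerivAt g a x₀)
    (hfd : ∀ᶠ i in l, HasDerivAt (f i) (b i) (x i)) (hb : Tendsto b l (𝓝 a)) :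
    Tendsto (fun i => legendreTransform (f i) (b i)) l (𝓝 (legendreTransform g a)) := by
  have hx : Tendsto x l (𝓝 x₀) := tendsto_of_hasDerivAt_of_convexOn hf hg hs hx₀ hlim hgd hfd hb
  rw [legendreTransform_eq_of_hasDerivAt hg.convexOn hgd]
  refine ((hx.mul hb).sub
    (tendsto_apply_of_convexOn hf hs hx₀ hlim hgd.continuousAt hx)).congr' ?_
  exact hfd.mono fun i hi => (legendreTransform_eq_of_hasDerivAt (hf i) hi).symm

end LegendreLimits

section StrictConvexity

variable {E F : Type*} [AddCommGroup E] [Module ℝ E] [AddCommGroup F] [Module ℝ F]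

lemma strictConvexOn_comp_linearMap {f : F → ℝ} {s : Set F} (hf : StrictConvexOn ℝ s f)
    (L : E →ₗ[ℝ] F) (hL : Function.Injective L) : StrictConvexOn ℝ (L ⁻¹' s) (f ∘ L) :=
  ⟨hf.1.linear_preimage L, fun x hx y hy hxy a b ha hb hab => by
    simpa only [Function.comp_apply, map_add, map_smul] using
      hf.2 hx hy (hL.ne hxy) ha hb hab⟩

lemma strictConvexOn_integral {α : Type*} [MeasurableSpace α] {μ : Measure α} {s : Set E}
    {f : E → α → ℝ} (hs : Convex ℝ s) (hconv : ∀ᵐ ω ∂μ, ConvexOn ℝ s (f · ω))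
    (hstrict : ∃ᵐ ω ∂μ, StrictConvexOn ℝ s (f · ω)) (hint : ∀ x ∈ s, Integrable (f x) μ) :
    StrictConvexOn ℝ s (fun x => ∫ ω, f x ω ∂μ) := by
  refine ⟨hs, fun x hx y hy hxy a b ha hb hab => ?_⟩
  have hxint : Integrable (fun ω => a • f x ω) μ := (hint x hx).smul a
  have hyint : Integrable (fun ω => b • f y ω) μ := (hint y hy).smul b
  have hxyint : Integrable (fun ω => a • f x ω + b • f y ω) μ := hxint.add hyint
  have hmidint := hint _ (hs hx hy ha.le hb.le hab)
  have hlt : ∫ ω, f (a • x + b • y) ω ∂μ < ∫ ω, (a • f x ω + b • f y ω) ∂μ := by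
    rw [← sub_pos, ← integral_sub hxyint hmidint, integral_pos_iff_support_of_nonneg_ae
      (hconv.mono fun ω h => sub_nonneg.2 (h.2 hx hy ha.le hb.le hab)) (hxyint.sub hmidint)]
    refine pos_iff_ne_zero.2 (frequently_ae_iff.1 (hstrict.mono fun ω h => ?_))
    exact (sub_pos.2 (h.2 hx hy hxy ha hb hab)).ne'
  calc ∫ ω, f (a • x + b • y) ω ∂μ
      < ∫ ω, (a • f x ω + b • f y ω) ∂μ := hlt
    _ = a • ∫ ω, f x ω ∂μ + b • ∫ ω, f y ω ∂μ := by
      rw [integral_add hxint hyint, integral_smul, integral_smul]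

end StrictConvexity

section StrongLaw

variable {Ω E : Type*} [MeasurableSpace Ω] [MeasurableSpace E] {P : Measure Ω} {μ : Measure E}
  {X : ℕ → Ω → E}

lemma ae_tendsto_sum_comp_div (hX : ∀ i, HasLaw (X i) μ P)
    (hindep : Pairwise fun i j => IndepFun (X i) (X j) P) {f : E → ℝ} (hf : Integrable f μ) :
    ∀ᵐ ω ∂P, Tendsto (fun n : ℕ => (∑ i ∈ Finset.range n, f (X i ω)) / n) atTop
      (𝓝 (∫ x, f x ∂μ)) := by
  have hfm (i : ℕ) : AEMeasurable f (P.map (X i)) := (hX i).map_eq ▸ hf.aemeasurable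
  have hint : Integrable (f ∘ X 0) P :=
    ((hX 0).map_eq ▸ hf : Integrable f (P.map (X 0))).comp_aemeasurable (hX 0).aemeasurable
  have hident (i : ℕ) : IdentDistrib (X i) (X 0) P P :=
    ⟨(hX i).aemeasurable, (hX 0).aemeasurable, (hX i).map_eq.trans (hX 0).map_eq.symm⟩
  rw [← (hX 0).integral_comp hf.aestronglyMeasurable]
  exact strong_law_ae_real (fun i => f ∘ X i) hint
    (fun i j hij => (hindep hij).comp₀ (hX i).aemeasurable (hX j).aemeasurable (hfm i) (hfm j))
    fun i => (hident i).comp_of_aemeasurable (hfm i)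

end StrongLaw

section LogMoment

variable {m : ℝ}

lemma gfun_denom_pos (hm : m ∈ Ioo (-1 : ℝ) 1) (x : ℝ) :
    0 < (1 + m) / 2 * exp (2 * x) + (1 - m) / 2 := by
  have h₁ : 0 < 1 + m := by linarith [hm.1]
  have h₂ : 0 < 1 - m := by linarith [hm.2]
  positivity

lemma gfun_eq_log_sub (hm : m ∈ Ioo (-1 : ℝ) 1) (x : ℝ) :
    gfun m x = log ((1 + m) / 2 * exp (2 * x) + (1 - m) / 2) - (1 + m) * x := by
  have hfactor : (1 + m) / 2 * exp (x * (1 - m)) + (1 - m) / 2 * exp (-(x * (1 + m))) =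
      ((1 + m) / 2 * exp (2 * x) + (1 - m) / 2) * exp (-(x * (1 + m))) := by
    rw [show x * (1 - m) = 2 * x + -(x * (1 + m)) by ring, exp_add]
    ring
  rw [gfun, hfactor, log_mul (gfun_denom_pos hm x).ne' (exp_ne_zero _), log_exp]
  ring

lemma gfun_zero (m : ℝ) : gfun m 0 = 0 := by
  simp [gfun, ← add_div]

lemma hasDerivAt_gfun (hm : m ∈ Ioo (-1 : ℝ) 1) (x : ℝ) :
    HasDerivAt (gfun m)
      ((1 - m) - (1 - m) / ((1 + m) / 2 * exp (2 * x) + (1 - m) / 2)) x := by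
  have hD := (gfun_denom_pos hm x).ne'
  have hexp : HasDerivAt (fun y : ℝ => exp (2 * y)) (exp (2 * x) * 2) x := by
    simpa using ((hasDerivAt_id x).const_mul 2).exp
  have hlog := (((hexp.const_mul ((1 + m) / 2)).add_const ((1 - m) / 2)).log hD).sub
    ((hasDerivAt_id x).const_mul (1 + m))
  rw [funext (gfun_eq_log_sub hm)]
  refine hlog.congr_deriv ?_
  have hnum : (1 + m) / 2 * (exp (2 * x) * 2) =
      2 * ((1 + m) / 2 * exp (2 * x) + (1 - m) / 2) - (1 - m) := by ring
  rw [hnum, sub_div, mul_div_cancel_right₀ _ hD]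
  ring

lemma differentiable_gfun (hm : m ∈ Ioo (-1 : ℝ) 1) : Differentiable ℝ (gfun m) :=
  fun x => (hasDerivAt_gfun hm x).differentiableAt

lemma strictConvexOn_gfun (hm : m ∈ Ioo (-1 : ℝ) 1) : StrictConvexOn ℝ univ (gfun m) := by
  refine StrictMono.strictConvexOn_univ_of_deriv (differentiable_gfun hm).continuous
    fun x y hxy => ?_
  rw [(hasDerivAt_gfun hm x).deriv, (hasDerivAt_gfun hm y).deriv]
  have h₁ : 0 < 1 + m := by linarith [hm.1]
  have h₂ : 0 < 1 - m := by linarith [hm.2]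
  have := gfun_denom_pos hm x
  gcongr

lemma lipschitzWith_gfun (hm : m ∈ Ioo (-1 : ℝ) 1) : LipschitzWith 2 (gfun m) := by
  refine lipschitzWith_of_nnnorm_deriv_le (differentiable_gfun hm) fun x => ?_
  have h₁ : 0 < 1 + m := by linarith [hm.1]
  have h₂ : 0 < 1 - m := by linarith [hm.2]
  have hD := gfun_denom_pos hm x
  have hnonneg : 0 ≤ (1 - m) / ((1 + m) / 2 * exp (2 * x) + (1 - m) / 2) := by positivity
  have hle_two : (1 - m) / ((1 + m) / 2 * exp (2 * x) + (1 - m) / 2) ≤ 2 := by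
    rw [div_le_iff₀ hD]
    linarith [mul_pos h₁ (exp_pos (2 * x))]
  rw [← NNReal.coe_le_coe, coe_nnnorm, (hasDerivAt_gfun hm x).deriv, Real.norm_eq_abs, abs_le]
  constructor <;> push_cast <;> linarith

lemma convexOn_gfun_mul (hm : m ∈ Ioo (-1 : ℝ) 1) (x : ℝ) :
    ConvexOn ℝ univ (fun t => gfun m (t * x)) :=
  (strictConvexOn_gfun hm).convexOn.comp_linearMap (LinearMap.mulRight ℝ x)

lemma strictConvexOn_gfun_mul (hm : m ∈ Ioo (-1 : ℝ) 1) {x : ℝ} (hx : x ≠ 0) :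
    StrictConvexOn ℝ univ (fun t => gfun m (t * x)) :=
  strictConvexOn_comp_linearMap (strictConvexOn_gfun hm) (LinearMap.mulRight ℝ x)
    (mul_left_injective₀ hx)

lemma convexOn_Mn (hm : m ∈ Ioo (-1 : ℝ) 1) (n : ℕ) (hs : ℕ → ℝ) :
    ConvexOn ℝ univ (Mn m n hs) := by
  unfold Mn
  induction n with
  | zero => simpa using convexOn_const (0 : ℝ) convex_univ
  | succ n ih =>
    simp only [Finset.sum_range_succ]
    exact ih.add (convexOn_gfun_mul hm (hs n))

lemma differentiable_Mn (hm : m ∈ Ioo (-1 : ℝ) 1) (n : ℕ) (hs : ℕ → ℝ) :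
    Differentiable ℝ (Mn m n hs) :=
  Differentiable.fun_sum fun _ _ => (differentiable_gfun hm).comp (differentiable_id.mul_const _)

lemma MstarN_div (n : ℕ) (hs : ℕ → ℝ) (b : ℝ) :
    MstarN m n hs b / n = legendreTransform (fun t => Mn m n hs t / n) (b / n) :=
  (legendreTransform_div (Mn m n hs) b n.cast_nonneg).symm

variable {μ : Measure ℝ}

lemma integrable_gfun_mul (hm : m ∈ Ioo (-1 : ℝ) 1) (hμ : Integrable id μ) (t : ℝ) :
    Integrable (fun x => gfun m (t * x)) μ :=
  memLp_one_iff_integrable.1 <| (lipschitzWith_gfun hm).comp_memLp (gfun_zero m)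
    (memLp_one_iff_integrable.2 (hμ.const_mul t))

lemma frequently_ne_zero_of_sigmaBar_pos (hσ : 0 < sigmaBar μ m) : ∃ᵐ x ∂μ, x ≠ 0 := by
  intro hzero
  have hae : ∀ᵐ x ∂μ, x = 0 := hzero.mono fun _ => not_not.1
  have hmean : ∫ x, x ∂μ = 0 := integral_eq_zero_of_ae hae
  have habs : ∫ x, |x| ∂μ = 0 := integral_eq_zero_of_ae (hae.mono fun _ hx => by simp [hx])
  simp [sigmaBar, hmean, habs] at hσ

lemma strictConvexOn_Gf (hm : m ∈ Ioo (-1 : ℝ) 1) (hμ : Integrable id μ)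
    (hne : ∃ᵐ x ∂μ, x ≠ 0) : StrictConvexOn ℝ univ (Gf μ m) :=
  strictConvexOn_integral convex_univ (ae_of_all μ (convexOn_gfun_mul hm))
    (hne.mono fun _ => strictConvexOn_gfun_mul hm) fun t _ => integrable_gfun_mul hm hμ t

end LogMoment

section RandomField

variable {Ω : Type*} [MeasurableSpace Ω] {P : Measure Ω} {X : ℕ → Ω → ℝ} {μ : Measure ℝ} {m : ℝ}

lemma ae_tendsto_Mn_div (hX : ∀ i, HasLaw (X i) μ P)
    (hindep : Pairwise fun i j => IndepFun (X i) (X j) P) (hμ : Integrable id μ)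
    (hm : m ∈ Ioo (-1 : ℝ) 1) (t : ℝ) :
    ∀ᵐ ω ∂P, Tendsto (fun n : ℕ => Mn m n (X · ω) t / n) atTop (𝓝 (Gf μ m t)) :=
  ae_tendsto_sum_comp_div hX hindep (integrable_gfun_mul hm hμ t)

lemma ae_tendsto_SigmaN_div (hX : ∀ i, HasLaw (X i) μ P)
    (hindep : Pairwise fun i j => IndepFun (X i) (X j) P) (hμ : Integrable id μ) (m : ℝ) :
    ∀ᵐ ω ∂P, Tendsto (fun n : ℕ => SigmaN m n (X · ω) / n) atTop (𝓝 (sigmaBar μ m)) := by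
  filter_upwards [ae_tendsto_sum_comp_div hX hindep hμ,
    ae_tendsto_sum_comp_div hX hindep hμ.abs] with ω hmean habs
  refine ((hmean.const_mul (-m)).add habs).congr fun n => ?_
  simp only [SigmaN, id_eq]
  ring

lemma eventually_mem_Ico_of_tendsto_div {A S : ℕ → ℝ} {a σ : ℝ} (ha : a ∈ Ioo 0 σ)
    (hA : Tendsto (fun n => A n / n) atTop (𝓝 a)) (hS : Tendsto (fun n => S n / n) atTop (𝓝 σ)) :
    ∀ᶠ n in atTop, A n ∈ Ico 0 (S n) := by
  filter_upwards [eventually_gt_atTop 0, hA.eventually_const_lt ha.1, hA.eventually_lt hS ha.2]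
    with n hn hpos hlt
  have hn' : (0 : ℝ) < n := Nat.cast_pos.2 hn
  exact ⟨((div_pos_iff_of_pos_right hn').1 hpos).le, (div_lt_div_iff_of_pos_right hn').1 hlt⟩

theorem stmt18_general (hX : ∀ i, HasLaw (X i) μ P)
    (hindep : Pairwise fun i j => IndepFun (X i) (X j) P) (hμ : Integrable id μ)
    (hm : m ∈ Ioo (-1 : ℝ) 1) {a : ℝ} (ha : a ∈ Ioo 0 (sigmaBar μ m)) {A : ℕ → Ω → ℝ}
    (hA : ∀ᵐ ω ∂P, Tendsto (fun n => A n ω / n) atTop (𝓝 a)) {Lam : ℕ → (ℕ → ℝ) → ℝ → ℝ}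
    (hLam : ∀ n hs, ∀ b ∈ Ico 0 (SigmaN m n hs), deriv (Mn m n hs) (Lam n hs b) = b)
    {lamHat : ℝ} (hlamHat : deriv (Gf μ m) lamHat = a) :
    ∀ᵐ ω ∂P,
      Tendsto (fun n => Lam n (X · ω) (A n ω)) atTop (𝓝 lamHat) ∧
      Tendsto (fun n => MstarN m n (X · ω) (A n ω) / n) atTop (𝓝 (Gstar μ m a)) := by
  have hG : StrictConvexOn ℝ univ (Gf μ m) :=
    strictConvexOn_Gf hm hμ (frequently_ne_zero_of_sigmaBar_pos (ha.1.trans ha.2))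
  have hGderiv : HasDerivAt (Gf μ m) a lamHat :=
    hlamHat ▸ (differentiableAt_of_deriv_ne_zero (hlamHat.trans_ne ha.1.ne')).hasDerivAt
  let s : Set ℝ := insert lamHat (range ((↑) : ℚ → ℝ))
  have hs : Dense s := Rat.denseRange_cast.mono (subset_insert _ _)
  have hlim : ∀ᵐ ω ∂P, ∀ t ∈ s,
      Tendsto (fun n : ℕ => Mn m n (X · ω) t / n) atTop (𝓝 (Gf μ m t)) :=
    (ae_ball_iff ((countable_range _).insert _)).2 fun t _ => ae_tendsto_Mn_div hX hindep hμ hm t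
  filter_upwards [hA, ae_tendsto_SigmaN_div hX hindep hμ m, hlim] with ω hAω hSigma hlimω
  have hconv (n : ℕ) : ConvexOn ℝ univ (fun t => Mn m n (X · ω) t / n) := by
    simpa only [div_eq_inv_mul, smul_eq_mul] using
      (convexOn_Mn hm n (X · ω)).smul (inv_nonneg.2 n.cast_nonneg)
  have hderiv : ∀ᶠ n : ℕ in atTop, HasDerivAt (fun t => Mn m n (X · ω) t / n) (A n ω / n)
      (Lam n (X · ω) (A n ω)) := by
    filter_upwards [eventually_mem_Ico_of_tendsto_div ha hAω hSigma] with n hn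
    exact (hLam n _ _ hn ▸ (differentiable_Mn hm n (X · ω) _).hasDerivAt).div_const _
  refine ⟨tendsto_of_hasDerivAt_of_convexOn hconv hG hs (mem_insert _ _) hlimω hGderiv hderiv hAω,
    ?_⟩
  simp only [MstarN_div]
  exact tendsto_legendreTransform_of_convexOn hconv hG hs (mem_insert _ _) hlimω hGderiv hderiv hAω

end RandomField

/-- if `A_n(h)/n → a ∈ (0,ς)` almost surely, then almost surely
`Λ_n(h,A_n(h)) → λ̂(a)` (the unique `λ ≥ 0` with `G'(λ) = a`) and
`M*_n(h,A_n(h))/n → G*(a)`.  Here `Lam n hs` is the inverse of `M'_n(hs,·)` on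
`[0, Σ_n(hs))`. -/
theorem stmt18 {Ω : Type*} [MeasurableSpace Ω] (P : Measure Ω) [IsProbabilityMeasure P]
    (X : ℕ → Ω → ℝ) (hXmeas : ∀ i, Measurable (X i))
    (hXindep : iIndepFun X P)
    (μ : Measure ℝ) (hXdist : ∀ i, Measure.map (X i) P = μ)
    (hAss : Assumption1 μ) (m : ℝ) (hm : m ∈ Set.Ioo (-1 : ℝ) 1)
    (a : ℝ) (ha : a ∈ Set.Ioo 0 (sigmaBar μ m))
    (A : ℕ → (ℕ → ℝ) → ℝ) (hAmeas : ∀ n, Measurable (A n))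
    (hAconv : ∀ᵐ ω ∂P,
      Tendsto (fun n => A n (fun i => X i ω) / n) atTop (nhds a))
    (Lam : ℕ → (ℕ → ℝ) → ℝ → ℝ)
    (hLam : ∀ n hs, ∀ b ∈ Set.Ico 0 (SigmaN m n hs),
      0 ≤ Lam n hs b ∧ deriv (Mn m n hs) (Lam n hs b) = b)
    (lamHat : ℝ) (hlamHat : 0 ≤ lamHat) (hlamHatEq : deriv (Gf μ m) lamHat = a) :
    ∀ᵐ ω ∂P,
      Tendsto (fun n => Lam n (fun i => X i ω) (A n (fun i => X i ω))) atTop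
        (nhds lamHat) ∧
      Tendsto (fun n => MstarN m n (fun i => X i ω) (A n (fun i => X i ω)) / n) atTop
        (nhds (Gstar μ m a)) := by
  have hμ : Integrable id μ := (integrable_norm_iff aestronglyMeasurable_id).1 hAss.intAbs
  exact stmt18_general (fun i => ⟨(hXmeas i).aemeasurable, hXdist i⟩)
    (fun _ _ => hXindep.indepFun) hμ hm ha hAconv (fun n hs b hb => (hLam n hs b hb).2) hlamHatEq
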